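/- Let F be a monotone hazard rate probability distribution supported on the non-negative reals with density f, hazard rate h, and strictly increasing virtual valuation φ. Then for every z ≥ 0, the integral of the hazard rate from z to φ⁻¹(z) is at most 1: ∫_z^{φ⁻¹(z)} h(y) dy ≤ 1. -/

import Mathlib

open MeasureTheory Real Set

/-! If `w` has virtual valuation `z = w - (h w)⁻¹`, where `h` is the hazard rate, then `[z, w]` has
length `(h w)⁻¹`, and a non-decreasing `h` is at most `h w` on it. -/

/-- The hazard rate of a distribution with density `f` and cumulative distribution function `F`.
Division by zero makes it `0` where `F x = 1`. -/
noncomputable def hazardRate (f F : ℝ → ℝ) (x : ℝ) : ℝ :=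
  f x / (1 - F x)

/-- The virtual valuation of a distribution, expressed through its hazard rate `h` and meaningful
where `h x ≠ 0`; `virtualValuation_hazardRate` recovers the usual formula in terms of the density
and the distribution function. -/
noncomputable def virtualValuation (h : ℝ → ℝ) (x : ℝ) : ℝ :=
  x - (h x)⁻¹

theorem virtualValuation_hazardRate (f F : ℝ → ℝ) (x : ℝ) :
    virtualValuation (hazardRate f F) x = x - (1 - F x) / f x := by
  rw [virtualValuation, hazardRate, inv_div]

theorem hazardRate_pos {f F : ℝ → ℝ} {x : ℝ} (hf : 0 < f x) (hF : F x < 1) :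
    0 < hazardRate f F x :=
  div_pos hf (sub_pos.2 hF)

theorem virtualValuation_lt_self {h : ℝ → ℝ} {x : ℝ} (hx : 0 < h x) :
    virtualValuation h x < x :=
  sub_lt_self x (inv_pos.2 hx)

theorem sub_virtualValuation_mul_self {h : ℝ → ℝ} {x : ℝ} (hx : h x ≠ 0) :
    (x - virtualValuation h x) * h x = 1 := by
  rw [virtualValuation, sub_sub_cancel, inv_mul_cancel₀ hx]

theorem integral_le_sub_mul_of_monotoneOn {g : ℝ → ℝ} {a b : ℝ} (hab : a ≤ b)
    (hg : MonotoneOn g (Icc a b)) : ∫ x in a..b, g x ≤ (b - a) * g b := by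
  have hint : IntervalIntegrable g volume a b :=
    MonotoneOn.intervalIntegrable (by rwa [uIcc_of_le hab])
  calc ∫ x in a..b, g x
      ≤ ∫ _ in a..b, g b :=
        intervalIntegral.integral_mono_on hab hint intervalIntegrable_const
          fun _ hx ↦ hg hx (right_mem_Icc.2 hab) hx.2
    _ = (b - a) * g b := by rw [intervalIntegral.integral_const, smul_eq_mul]

theorem stmt_3_general {h : ℝ → ℝ} {z w : ℝ} (hw : 0 < h w) (hz : virtualValuation h w = z)
    (h_mono : MonotoneOn h (Icc z w)) : ∫ y in z..w, h y ≤ 1 := by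
  subst hz
  calc ∫ y in virtualValuation h w..w, h y
      ≤ (w - virtualValuation h w) * h w :=
        integral_le_sub_mul_of_monotoneOn (virtualValuation_lt_self hw).le h_mono
    _ = 1 := sub_virtualValuation_mul_self hw.ne'

theorem stmt_3
(f F : ℝ → ℝ)
    (hf_cont : ContinuousOn f (Ici 0))
    (hf_pos : ∀ z ∈ Ici (0:ℝ), 0 < f z)
    (hF : ∀ z ∈ Ici (0:ℝ), F z = ∫ t in (0:ℝ)..z, f t)
    (hF_lt : ∀ z ∈ Ici (0:ℝ), F z < 1)
    (hprob : ∫ z in Ioi (0:ℝ), f z = 1)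
(hMHR : ∀ y z : ℝ, 0 ≤ y → y ≤ z → f y / (1 - F y) ≤ f z / (1 - F z))
(φ ψ : ℝ → ℝ)
    (hφ : ∀ z ∈ Ici (0:ℝ), φ z = z - (1 - F z) / f z)
    (hφ_mono : StrictMonoOn φ (Ici 0))
    (hφ_top : Filter.Tendsto φ Filter.atTop Filter.atTop)
    (hψ : ∀ y ∈ Ici (0:ℝ), ψ y ∈ Ici (0:ℝ) ∧ φ (ψ y) = y) :
    ∀ z : ℝ, 0 ≤ z → ∫ y in z..(ψ z), f y / (1 - F y) ≤ 1 := by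
  intro z hz
  obtain ⟨hw, hφw⟩ := hψ z hz
  have hz_eq : virtualValuation (hazardRate f F) (ψ z) = z := by
    rw [virtualValuation_hazardRate, ← hφ _ hw, hφw]
  exact stmt_3_general (hazardRate_pos (hf_pos _ hw) (hF_lt _ hw)) hz_eq
    fun x hx y _ hxy ↦ hMHR x y (hz.trans hx.1) hxy
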